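/- Let T > 0, λ ≥ 1, M ≥ 0, N ≥ 1, and let η : ℝ^N → ℝ be twice continuously differentiable with 0 ≤ η(x) ≤ M, ‖∇η(x)‖ ≤ K and |Δη(x)| ≤ K for all x. Let s ≥ T²/4, fix t ∈ (0,T), and let α, ξ be the Carleman weight functions. Then there exists a constant C > 0 depending only on K such that the Laplacian in x satisfies |Δ_x(e^{−2sα} s³λ⁴ξ³)(x,t)| ≤ C · e^{−2sα(x,t)} · s⁵λ⁶ξ(x,t)⁵ for all x ∈ ℝ^N. -/

import Mathlib

/-!
The weight depends on `x` only through `η`: it is `g ∘ η` for a function `g` of one real variable,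
so the chain rule for the Laplacian (`euclideanLaplacian_comp`) gives
`Δ(g ∘ η) = g''(η) ‖∇η‖² + g'(η) Δη`.
Writing `X = e^{λ(2M+r)}/(t(T-t))`, which satisfies `X' = λX`, and `E = e^{-2sα}`,
one gets (`hasDerivAt_carlemanProfile`)
`g' = s³λ⁵ E (2sX⁴ + 3X³)` and `g'' = s³λ⁶ E (4s²X⁵ + 14sX⁴ + 9X³)`.
Since `s ≥ T²/4` and `t(T-t) ≤ T²/4`, one has `sX ≥ 1`; with `λ ≥ 1` every term is then dominated by
`s⁵λ⁶ E X⁵`, and `27 K² + 5 K` bounds the sum of the coefficients.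
-/

/-- The Laplacian of a real-valued function on `ℝ^N`, as the sum of its second
partial derivatives along the standard basis directions. -/
noncomputable def euclideanLaplacian {N : ℕ} (f : EuclideanSpace ℝ (Fin N) → ℝ)
    (x : EuclideanSpace ℝ (Fin N)) : ℝ :=
  ∑ i : Fin N, fderiv ℝ (fun y => fderiv ℝ f y (EuclideanSpace.single i 1)) x
    (EuclideanSpace.single i 1)

lemma sum_sq_fderiv_single {N : ℕ} (f : EuclideanSpace ℝ (Fin N) → ℝ)
    (x : EuclideanSpace ℝ (Fin N)) :
    ∑ i : Fin N, (fderiv ℝ f x (EuclideanSpace.single i 1)) ^ 2 = ‖gradient f x‖ ^ 2 := by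
  rw [EuclideanSpace.real_norm_sq_eq]
  refine Finset.sum_congr rfl fun i _ => ?_
  have h : inner ℝ (gradient f x) (EuclideanSpace.single i (1 : ℝ))
      = fderiv ℝ f x (EuclideanSpace.single i 1) := by
    simp [gradient]
  rw [← h, EuclideanSpace.inner_single_right]
  simp

/-- Chain rule for the Laplacian: `Δ(g ∘ η) = g''(η) ‖∇η‖² + g'(η) Δη`. -/
lemma euclideanLaplacian_comp {N : ℕ} {g g' g'' : ℝ → ℝ}
    (hg : ∀ r, HasDerivAt g (g' r) r) (hg' : ∀ r, HasDerivAt g' (g'' r) r)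
    {η : EuclideanSpace ℝ (Fin N) → ℝ} (hη : ContDiff ℝ 2 η) (x : EuclideanSpace ℝ (Fin N)) :
    euclideanLaplacian (fun y => g (η y)) x
      = g'' (η x) * ‖gradient η x‖ ^ 2 + g' (η x) * euclideanLaplacian η x := by
  have hd : Differentiable ℝ η := hη.differentiable (by norm_num)
  have hd2 : Differentiable ℝ (fderiv ℝ η) :=
    (hη.fderiv_right (m := 1) (by norm_num)).differentiable (by norm_num)
  rw [← sum_sq_fderiv_single]
  unfold euclideanLaplacian
  rw [Finset.mul_sum, Finset.mul_sum, ← Finset.sum_add_distrib]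
  refine Finset.sum_congr rfl fun i _ => ?_
  set v : EuclideanSpace ℝ (Fin N) := EuclideanSpace.single i 1
  have h1 : (fun y => fderiv ℝ (fun z => g (η z)) y v)
      = fun y => g' (η y) * fderiv ℝ η y v := by
    funext y
    have h := (hg (η y)).comp_hasFDerivAt y (hd y).hasFDerivAt
    rw [show (fun z => g (η z)) = g ∘ η from rfl, h.fderiv]
    simp
  have h2 : HasFDerivAt (fun y => g' (η y)) (g'' (η x) • fderiv ℝ η x) x :=
    (hg' (η x)).comp_hasFDerivAt x (hd x).hasFDerivAt
  have h3 : DifferentiableAt ℝ (fun y => fderiv ℝ η y v) x :=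
    (hd2 x).clm_apply (differentiableAt_const v)
  rw [h1, (h2.fun_mul h3.hasFDerivAt).fderiv]
  simp only [add_apply, smul_apply, smul_eq_mul]
  ring

/-- The model function `exp(-2s(A - e^{λ(2M+r)})/D) (e^{λ(2M+r)}/D)^n` of one real variable. -/
noncomputable def carlemanProfile (s A lam M D : ℝ) (n : ℕ) (r : ℝ) : ℝ :=
  Real.exp (-2 * s * ((A - Real.exp (lam * (2 * M + r))) / D)) *
    (Real.exp (lam * (2 * M + r)) / D) ^ n

/-- Differentiation maps the profile of degree `n` to a combination of those of degrees `n + 1` and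
`n`, so that both derivatives of the weight follow from this one formula. -/
lemma hasDerivAt_carlemanProfile (s A lam M D : ℝ) (n : ℕ) (r : ℝ) :
    HasDerivAt (carlemanProfile s A lam M D n)
      (lam * (2 * s * carlemanProfile s A lam M D (n + 1) r
        + n * carlemanProfile s A lam M D n r)) r := by
  have h0 : HasDerivAt (fun r => Real.exp (lam * (2 * M + r)))
      (Real.exp (lam * (2 * M + r)) * lam) r := by
    simpa using (((hasDerivAt_id r).const_add (2 * M)).const_mul lam).exp
  have h1 := ((((h0.const_sub A).div_const D).const_mul (-2 * s)).exp).mul ((h0.div_const D).pow n)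
  refine h1.congr_deriv ?_
  unfold carlemanProfile
  rcases n with _ | n
  · simp
    ring
  · push_cast
    simp only [Pi.pow_apply]
    ring

/-- Laplacian bound for the Carleman weight combination
`e^{−2sα} s³λ⁴ξ³` at fixed time `t`: there is a constant `C > 0` depending only
on `K` such that `|Δₓ(e^{−2sα} s³λ⁴ξ³)| ≤ C · e^{−2sα} s⁵λ⁶ξ⁵`, where
`α(x) = (e^{4λM} − e^{λ(2M+η(x))})/(t(T−t))`,
`ξ(x) = e^{λ(2M+η(x))}/(t(T−t))`, `η` is `C²` with `‖∇η‖ ≤ K`, `|Δη| ≤ K`,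
`λ ≥ 1` and `s ≥ T²/4`. -/
theorem carleman_weight_laplacian_bound (K : ℝ) (hK : 0 ≤ K) :
    ∃ C > 0, ∀ (N : ℕ), 1 ≤ N → ∀ (T lam M s t : ℝ),
      0 < T → 1 ≤ lam → 0 ≤ M → T ^ 2 / 4 ≤ s → t ∈ Set.Ioo 0 T →
      ∀ η : EuclideanSpace ℝ (Fin N) → ℝ, ContDiff ℝ 2 η →
      (∀ x, η x ∈ Set.Icc 0 M) → (∀ x, ‖gradient η x‖ ≤ K) →
      (∀ x, |euclideanLaplacian η x| ≤ K) →
      ∀ x : EuclideanSpace ℝ (Fin N),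
        |euclideanLaplacian (fun y =>
            Real.exp (-2 * s *
                ((Real.exp (4 * lam * M) - Real.exp (lam * (2 * M + η y))) / (t * (T - t)))) *
              s ^ 3 * lam ^ 4 *
              (Real.exp (lam * (2 * M + η y)) / (t * (T - t))) ^ 3) x| ≤
          C *
            Real.exp (-2 * s *
              ((Real.exp (4 * lam * M) - Real.exp (lam * (2 * M + η x))) / (t * (T - t)))) *
            s ^ 5 * lam ^ 6 *
            (Real.exp (lam * (2 * M + η x)) / (t * (T - t))) ^ 5 := by
  -- The summand `1` only keeps the constant positive when `K = 0`.
  refine ⟨27 * K ^ 2 + 5 * K + 1, by positivity, ?_⟩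
  intro N _ T lam M s t hT hlam hM hs ht η hη hηM hgrad hlap x
  obtain ⟨ht0, htT⟩ := ht
  set A := Real.exp (4 * lam * M)
  set D := t * (T - t) with hD
  have hDpos : 0 < D := mul_pos ht0 (by linarith)
  have hDle : D ≤ s := by nlinarith [sq_nonneg (T - 2 * t)]
  have hspos : 0 < s := hDpos.trans_le hDle
  let P : ℕ → ℝ → ℝ := carlemanProfile s A lam M D
  have hP : ∀ n r, HasDerivAt (P n) (lam * (2 * s * P (n + 1) r + n * P n r)) r :=
    hasDerivAt_carlemanProfile s A lam M D
  have hg : ∀ r, HasDerivAt (fun r => s ^ 3 * lam ^ 4 * P 3 r)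
      (s ^ 3 * lam ^ 5 * (2 * s * P 4 r + 3 * P 3 r)) r := fun r =>
    ((hP 3 r).const_mul (s ^ 3 * lam ^ 4)).congr_deriv (by push_cast; ring)
  have hg' : ∀ r, HasDerivAt (fun r => s ^ 3 * lam ^ 5 * (2 * s * P 4 r + 3 * P 3 r))
      (s ^ 3 * lam ^ 6 * (4 * s ^ 2 * P 5 r + 14 * s * P 4 r + 9 * P 3 r)) r := fun r =>
    ((((hP 4 r).const_mul (2 * s)).add ((hP 3 r).const_mul 3)).const_mul
      (s ^ 3 * lam ^ 5)).congr_deriv (by push_cast; ring)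
  have key := euclideanLaplacian_comp hg hg' hη x
  rw [show (fun y => Real.exp (-2 * s * ((A - Real.exp (lam * (2 * M + η y))) / D)) * s ^ 3
      * lam ^ 4 * (Real.exp (lam * (2 * M + η y)) / D) ^ 3)
      = fun y => s ^ 3 * lam ^ 4 * P 3 (η y) by
    funext y
    simp only [P, carlemanProfile]
    ring, key]
  simp only [P, carlemanProfile]
  set E := Real.exp (-2 * s * ((A - Real.exp (lam * (2 * M + η x))) / D))
  set X := Real.exp (lam * (2 * M + η x)) / D with hX
  have hE : 0 < E := Real.exp_pos _
  have hXpos : 0 < X := div_pos (Real.exp_pos _) hDpos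
  have hsX : 1 ≤ s * X := by
    have h1 : 1 ≤ Real.exp (lam * (2 * M + η x)) :=
      Real.one_le_exp (mul_nonneg (by linarith) (by linarith [(hηM x).1]))
    rw [hX, ← mul_div_assoc, le_div_iff₀ hDpos]
    nlinarith
  -- The common majorant of all the terms.
  set Q := E * s ^ 5 * lam ^ 6 * X ^ 5 with hQ
  have hQ0 : 0 ≤ Q := by positivity
  have h2 : 1 ≤ (s * X) ^ 2 := one_le_pow₀ hsX
  have hlow : 2 * (s * X) + 3 ≤ 5 * (s * X) ^ 2 := by nlinarith
  have hlow' : 4 * (s * X) ^ 2 + 14 * (s * X) + 9 ≤ 27 * (s * X) ^ 2 := by nlinarith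
  have b1 : s ^ 3 * lam ^ 5 * (2 * s * (E * X ^ 4) + 3 * (E * X ^ 3)) ≤ 5 * Q := by
    calc s ^ 3 * lam ^ 5 * (2 * s * (E * X ^ 4) + 3 * (E * X ^ 3))
        = s ^ 3 * E * X ^ 3 * lam ^ 5 * (2 * (s * X) + 3) := by ring
      _ ≤ s ^ 3 * E * X ^ 3 * lam ^ 6 * (5 * (s * X) ^ 2) := by
          gcongr
          norm_num
      _ = 5 * Q := by rw [hQ]; ring
  have b2 : s ^ 3 * lam ^ 6 * (4 * s ^ 2 * (E * X ^ 5) + 14 * s * (E * X ^ 4) + 9 * (E * X ^ 3))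
      ≤ 27 * Q := by
    calc s ^ 3 * lam ^ 6 * (4 * s ^ 2 * (E * X ^ 5) + 14 * s * (E * X ^ 4) + 9 * (E * X ^ 3))
        = s ^ 3 * E * X ^ 3 * lam ^ 6 * (4 * (s * X) ^ 2 + 14 * (s * X) + 9) := by ring
      _ ≤ s ^ 3 * E * X ^ 3 * lam ^ 6 * (27 * (s * X) ^ 2) := by gcongr
      _ = 27 * Q := by rw [hQ]; ring
  have hlam0 : 0 < lam := by linarith
  have n1 : 0 ≤ s ^ 3 * lam ^ 5 * (2 * s * (E * X ^ 4) + 3 * (E * X ^ 3)) := by positivity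
  have n2 : 0 ≤ s ^ 3 * lam ^ 6 *
      (4 * s ^ 2 * (E * X ^ 5) + 14 * s * (E * X ^ 4) + 9 * (E * X ^ 3)) := by positivity
  refine (abs_add_le _ _).trans ?_
  rw [abs_mul _ (‖gradient η x‖ ^ 2), abs_mul _ (euclideanLaplacian η x), abs_of_nonneg n1,
    abs_of_nonneg n2, abs_of_nonneg (sq_nonneg _)]
  have hk : ‖gradient η x‖ ^ 2 ≤ K ^ 2 := by gcongr; exact hgrad x
  calc _ ≤ 27 * Q * K ^ 2 + 5 * Q * K := by
        gcongr
        exact hlap x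
    _ ≤ (27 * K ^ 2 + 5 * K + 1) * Q := by linarith
    _ = _ := by rw [hQ]; ring
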